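/- Let γ: ℝ × (−ε, ε) → ℝ² be a smooth family of closed plane curves with ∂_t γ = f N for a smooth function f(u,t), let ψ be smooth on an open set containing all the images, and suppose the initial curve γ(·,0) is ψ-minimal. Then the second variation of the ψ-length is d²/dt² L_ψ |_{t=0} = ∫₀^{2π} [ (∂_s f)² − f² ( k² − (Hess ψ)(γ)(N,N) ) ] e^{ψ(γ)} |∂_u γ| du, where all quantities on the right are evaluated at t = 0 and (Hess ψ)(γ)(N,N) denotes the second derivative of ψ at γ(u,0) in the direction N. -/

import Mathlib

noncomputable section
open Real Set

def dot2 (v w : ℝ × ℝ) : ℝ := v.1 * w.1 + v.2 * w.2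

def nrm2 (v : ℝ × ℝ) : ℝ := Real.sqrt (v.1 ^ 2 + v.2 ^ 2)

def Jrot (v : ℝ × ℝ) : ℝ × ℝ := (-v.2, v.1)

structure IsClosedCurve (γ : ℝ → ℝ × ℝ) : Prop where
  smooth : ContDiff ℝ (⊤ : ℕ∞) γ
  periodic : Function.Periodic γ (2 * π)
  regular : ∀ u, deriv γ u ≠ 0

def tangentC (γ : ℝ → ℝ × ℝ) (u : ℝ) : ℝ × ℝ := (nrm2 (deriv γ u))⁻¹ • deriv γ u

def normalC (γ : ℝ → ℝ × ℝ) (u : ℝ) : ℝ × ℝ := Jrot (tangentC γ u)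

def arcDeriv {F : Type*} [NormedAddCommGroup F] [NormedSpace ℝ F]
    (γ : ℝ → ℝ × ℝ) (h : ℝ → F) (u : ℝ) : F :=
  (nrm2 (deriv γ u))⁻¹ • deriv h u

def curvature (γ : ℝ → ℝ × ℝ) (u : ℝ) : ℝ :=
  dot2 (arcDeriv γ (tangentC γ) u) (normalC γ u)

def psiCurv (ψ : ℝ × ℝ → ℝ) (γ : ℝ → ℝ × ℝ) (u : ℝ) : ℝ :=
  curvature γ u - fderiv ℝ ψ (γ u) (normalC γ u)

def IsPsiMinimal (ψ : ℝ × ℝ → ℝ) (γ : ℝ → ℝ × ℝ) : Prop :=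
  ∀ u, psiCurv ψ γ u = 0

def signedArea (γ : ℝ → ℝ × ℝ) : ℝ :=
  (1/2) * ∫ u in (0:ℝ)..(2*π), ((γ u).1 * (deriv γ u).2 - (γ u).2 * (deriv γ u).1)

def turningNumber (γ : ℝ → ℝ × ℝ) : ℝ :=
  (1/(2*π)) * ∫ u in (0:ℝ)..(2*π), curvature γ u * nrm2 (deriv γ u)

def windingNumber (γ : ℝ → ℝ × ℝ) : ℝ :=
  (1/(2*π)) * ∫ u in (0:ℝ)..(2*π),
    ((γ u).1 * (deriv γ u).2 - (γ u).2 * (deriv γ u).1) / (nrm2 (γ u))^2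

def hess2 (ψ : ℝ × ℝ → ℝ) (x v : ℝ × ℝ) : ℝ :=
  fderiv ℝ (fun y => fderiv ℝ ψ y v) x v

def SmoothFamily (γ : ℝ → ℝ → ℝ × ℝ) : Prop :=
  ContDiff ℝ (⊤ : ℕ∞) fun p : ℝ × ℝ => γ p.1 p.2

open scoped ContDiff Topology

/-!
Write `k` for the curvature, `k_ψ` for the `ψ`-curvature and `dm = e^ψ |∂_u γ| du`. Commuting `∂_t`
with `∂_u` in `∂_t γ = f N` turns the frame along the curve by `∂_t T = (∂_s f) N`, whence
`∂_t k = ∂_s² f + f k²` and `∂_t dm = -f k_ψ dm`. So the first variation of the `ψ`-length is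
`-∫ f k_ψ dm`, with no integration by parts. Differentiating once more, the terms
`f ∂_s² f + f ∂_s f ⟨∇ψ, T⟩` coming from `∂_t k_ψ` are, up to `(∂_s f)²`, the total derivative
`∂_s (f ∂_s f e^ψ) e^{-ψ}`, which integrates to zero over a closed curve, while every remaining
unwanted term carries a factor `k_ψ`.
-/

section Families

variable {E : Type*} [NormedAddCommGroup E] [NormedSpace ℝ E] {I : Set ℝ} {F : ℝ → ℝ → E} {t : ℝ}

/-- `F t u` is jointly smooth in the time `t ∈ I` and the curve parameter `u ∈ ℝ`. As in
`SmoothFamily`, the time is the first argument. -/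
def SmoothFamilyOn (I : Set ℝ) (F : ℝ → ℝ → E) : Prop :=
  ContDiffOn ℝ ∞ (fun p : ℝ × ℝ => F p.1 p.2) (I ×ˢ univ)

namespace SmoothFamilyOn

theorem contDiffAt (hF : SmoothFamilyOn I F) (hI : IsOpen I) (ht : t ∈ I) (u : ℝ) :
    ContDiffAt ℝ ∞ (fun p : ℝ × ℝ => F p.1 p.2) (t, u) :=
  ContDiffOn.contDiffAt hF ((hI.prod isOpen_univ).mem_nhds ⟨ht, mem_univ u⟩)

theorem contDiff_slice (hF : SmoothFamilyOn I F) (ht : t ∈ I) : ContDiff ℝ ∞ (F t) :=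
  ContDiffOn.comp_contDiff (g := fun p : ℝ × ℝ => F p.1 p.2) hF
    (contDiff_const.prodMk contDiff_id) fun _ => ⟨ht, mem_univ _⟩

theorem differentiable_slice (hF : SmoothFamilyOn I F) (ht : t ∈ I) : Differentiable ℝ (F t) :=
  (hF.contDiff_slice ht).differentiable (by simp)

theorem hasDerivAt_time_fderiv (hF : SmoothFamilyOn I F) (hI : IsOpen I) (ht : t ∈ I) (u : ℝ) :
    HasDerivAt (fun τ => F τ u) (fderiv ℝ (fun p : ℝ × ℝ => F p.1 p.2) (t, u) (1, 0)) t :=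
  ((hF.contDiffAt hI ht u).differentiableAt (by simp)).hasFDerivAt.comp_hasDerivAt
    (f := fun τ => (τ, u)) t ((hasDerivAt_id t).prodMk (hasDerivAt_const t u))

theorem hasDerivAt_slice_fderiv (hF : SmoothFamilyOn I F) (hI : IsOpen I) (ht : t ∈ I) (u : ℝ) :
    HasDerivAt (F t) (fderiv ℝ (fun p : ℝ × ℝ => F p.1 p.2) (t, u) (0, 1)) u :=
  ((hF.contDiffAt hI ht u).differentiableAt (by simp)).hasFDerivAt.comp_hasDerivAt u
    ((hasDerivAt_const u t).prodMk (hasDerivAt_id u))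

theorem hasDerivAt_time (hF : SmoothFamilyOn I F) (hI : IsOpen I) (ht : t ∈ I) (u : ℝ) :
    HasDerivAt (fun τ => F τ u) (deriv (fun τ => F τ u) t) t :=
  (hF.hasDerivAt_time_fderiv hI ht u).differentiableAt.hasDerivAt

theorem fderiv_apply (hF : SmoothFamilyOn I F) (hI : IsOpen I) (v : ℝ × ℝ) :
    SmoothFamilyOn I fun t u => fderiv ℝ (fun p : ℝ × ℝ => F p.1 p.2) (t, u) v :=
  (ContDiffOn.fderiv_of_isOpen hF (hI.prod isOpen_univ) (by simp)).clm_apply contDiffOn_const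

theorem deriv_time (hF : SmoothFamilyOn I F) (hI : IsOpen I) :
    SmoothFamilyOn I fun t u => deriv (fun τ => F τ u) t :=
  ContDiffOn.congr (hF.fderiv_apply hI (1, 0)) fun p hp =>
    (hF.hasDerivAt_time_fderiv hI hp.1 p.2).deriv

theorem deriv_slice (hF : SmoothFamilyOn I F) (hI : IsOpen I) :
    SmoothFamilyOn I fun t => deriv (F t) :=
  ContDiffOn.congr (hF.fderiv_apply hI (0, 1)) fun p hp =>
    (hF.hasDerivAt_slice_fderiv hI hp.1 p.2).deriv

theorem deriv_time_deriv_slice (hF : SmoothFamilyOn I F) (hI : IsOpen I) (ht : t ∈ I) (u : ℝ) :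
    deriv (fun τ => deriv (F τ) u) t = deriv (fun v => deriv (fun τ => F τ v) t) u := by
  set Φ : ℝ × ℝ → E := fun p => F p.1 p.2
  have hΦ : ContDiffAt ℝ ∞ Φ (t, u) := hF.contDiffAt hI ht u
  have hDΦ : DifferentiableAt ℝ (fderiv ℝ Φ) (t, u) :=
    (hΦ.fderiv_right (m := ∞) (by simp)).differentiableAt (by simp)
  have hDD (v w : ℝ × ℝ) :
      fderiv ℝ (fun p => fderiv ℝ Φ p v) (t, u) w = fderiv ℝ (fderiv ℝ Φ) (t, u) w v := by
    simp [fderiv_clm_apply hDΦ (differentiableAt_const v)]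
  have hslice : (fun τ => deriv (F τ) u) =ᶠ[𝓝 t] fun τ => fderiv ℝ Φ (τ, u) (0, 1) := by
    filter_upwards [hI.mem_nhds ht] with τ hτ using (hF.hasDerivAt_slice_fderiv hI hτ u).deriv
  have htime : (fun v => deriv (fun τ => F τ v) t) = fun v => fderiv ℝ Φ (t, v) (1, 0) :=
    funext fun v => (hF.hasDerivAt_time_fderiv hI ht v).deriv
  calc deriv (fun τ => deriv (F τ) u) t
      = fderiv ℝ (fderiv ℝ Φ) (t, u) (1, 0) (0, 1) := by
        rw [hslice.deriv_eq, ← hDD]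
        exact ((hF.fderiv_apply hI (0, 1)).hasDerivAt_time_fderiv hI ht u).deriv
    _ = fderiv ℝ (fderiv ℝ Φ) (t, u) (0, 1) (1, 0) :=
        hΦ.isSymmSndFDerivAt (by simpa using WithTop.coe_le_coe.2 (le_top (a := (2 : ℕ∞)))) _ _
    _ = deriv (fun v => deriv (fun τ => F τ v) t) u := by
        rw [htime, ← hDD]
        exact ((hF.fderiv_apply hI (1, 0)).hasDerivAt_slice_fderiv hI ht u).deriv.symm

theorem hasDerivAt_integral (hF : SmoothFamilyOn I F) (hI : IsOpen I) (ht : t ∈ I) (a b : ℝ) :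
    HasDerivAt (fun τ => ∫ u in a..b, F τ u) (∫ u in a..b, deriv (fun τ => F τ u) t) t := by
  have hF' := hF.deriv_time hI
  obtain ⟨r, hr, hrI⟩ := Metric.nhds_basis_closedBall.mem_iff.1 (hI.mem_nhds ht)
  obtain ⟨C, hC⟩ := ((isCompact_closedBall t r).prod
    (isCompact_uIcc (a := a) (b := b))).exists_bound_of_continuousOn
      (ContDiffOn.continuousOn hF' |>.mono (prod_mono hrI (subset_univ _)))
  refine (intervalIntegral.hasDerivAt_integral_of_dominated_loc_of_deriv_le
    (F' := fun τ u => deriv (fun σ => F σ u) τ) (bound := fun _ => C)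
    (Metric.closedBall_mem_nhds t hr) ?_ ?_ ?_ ?_ intervalIntegrable_const ?_).2
  · filter_upwards [hI.mem_nhds ht] with τ hτ
    exact (hF.contDiff_slice hτ).continuous.aestronglyMeasurable
  · exact (hF.contDiff_slice ht).continuous.intervalIntegrable a b
  · exact (hF'.contDiff_slice ht).continuous.aestronglyMeasurable
  · exact .of_forall fun u hu τ hτ => hC (τ, u) ⟨hτ, uIoc_subset_uIcc hu⟩
  · exact .of_forall fun u _ τ hτ => hF.hasDerivAt_time hI (hrI hτ) u

end SmoothFamilyOn

end Families

section Plane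

variable {v w : ℝ × ℝ}

theorem dot2_self (v : ℝ × ℝ) : dot2 v v = nrm2 v ^ 2 := by
  rw [nrm2, sq_sqrt (by positivity), dot2, sq, sq]

theorem dot2_sub_left (v₁ v₂ w : ℝ × ℝ) : dot2 (v₁ - v₂) w = dot2 v₁ w - dot2 v₂ w := by
  simp only [dot2, Prod.fst_sub, Prod.snd_sub]
  ring

theorem dot2_smul_left (a : ℝ) (v w : ℝ × ℝ) : dot2 (a • v) w = a * dot2 v w := by
  simp only [dot2, Prod.smul_fst, Prod.smul_snd, smul_eq_mul]
  ring

theorem dot2_smul_right (a : ℝ) (v w : ℝ × ℝ) : dot2 v (a • w) = a * dot2 v w := by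
  simp only [dot2, Prod.smul_fst, Prod.smul_snd, smul_eq_mul]
  ring

theorem dot2_Jrot_left_self (v : ℝ × ℝ) : dot2 (Jrot v) v = 0 := by
  simp only [dot2, Jrot]
  ring

theorem dot2_Jrot_right_self (v : ℝ × ℝ) : dot2 v (Jrot v) = 0 := by
  simp only [dot2, Jrot]
  ring

theorem dot2_Jrot_Jrot (v w : ℝ × ℝ) : dot2 (Jrot v) (Jrot w) = dot2 v w := by
  simp only [dot2, Jrot]
  ring

theorem Jrot_smul (a : ℝ) (v : ℝ × ℝ) : Jrot (a • v) = a • Jrot v := by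
  simp [Jrot]

theorem Jrot_Jrot (v : ℝ × ℝ) : Jrot (Jrot v) = -v := rfl

theorem eq_dot2_Jrot_smul_Jrot (hv : dot2 v v = 1) (hwv : dot2 w v = 0) :
    w = dot2 w (Jrot v) • Jrot v := by
  simp only [dot2, Jrot] at *
  ext <;> simp only [Prod.smul_fst, Prod.smul_snd, smul_eq_mul]
  · linear_combination -w.1 * hv + v.1 * hwv
  · linear_combination -w.2 * hv + v.2 * hwv

theorem sq_add_sq_pos_of_ne_zero (hv : v ≠ 0) : 0 < v.1 ^ 2 + v.2 ^ 2 := by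
  rcases not_and_or.1 (mt Prod.ext_iff.2 hv) with h | h
  · exact add_pos_of_pos_of_nonneg (sq_pos_of_ne_zero h) (sq_nonneg _)
  · exact add_pos_of_nonneg_of_pos (sq_nonneg _) (sq_pos_of_ne_zero h)

theorem nrm2_ne_zero (hv : v ≠ 0) : nrm2 v ≠ 0 :=
  (sqrt_pos.2 (sq_add_sq_pos_of_ne_zero hv)).ne'

theorem contDiffAt_nrm2 {n : WithTop ℕ∞} (hv : v ≠ 0) : ContDiffAt ℝ n nrm2 v :=
  ContDiffAt.sqrt (by fun_prop) (sq_add_sq_pos_of_ne_zero hv).ne'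

variable {V W : ℝ → ℝ × ℝ} {V' W' : ℝ × ℝ} {s : ℝ}

theorem hasDerivAt_fst (hV : HasDerivAt V V' s) : HasDerivAt (fun r => (V r).1) V'.1 s :=
  (hasFDerivAt_fst (p := V s)).comp_hasDerivAt s hV

theorem hasDerivAt_snd (hV : HasDerivAt V V' s) : HasDerivAt (fun r => (V r).2) V'.2 s :=
  (hasFDerivAt_snd (p := V s)).comp_hasDerivAt s hV

theorem hasDerivAt_dot2 (hV : HasDerivAt V V' s) (hW : HasDerivAt W W' s) :
    HasDerivAt (fun r => dot2 (V r) (W r)) (dot2 V' (W s) + dot2 (V s) W') s :=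
  (((hasDerivAt_fst hV).fun_mul (hasDerivAt_fst hW)).fun_add
    ((hasDerivAt_snd hV).fun_mul (hasDerivAt_snd hW))).congr_deriv (by simp only [dot2]; ring)

theorem hasDerivAt_Jrot (hV : HasDerivAt V V' s) :
    HasDerivAt (fun r => Jrot (V r)) (Jrot V') s :=
  (hasDerivAt_snd hV).fun_neg.prodMk (hasDerivAt_fst hV)

theorem hasDerivAt_nrm2 (hV : HasDerivAt V V' s) (h0 : V s ≠ 0) :
    HasDerivAt (fun r => nrm2 (V r)) (dot2 V' (V s) / nrm2 (V s)) s := by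
  refine ((((hasDerivAt_fst hV).fun_pow 2).fun_add ((hasDerivAt_snd hV).fun_pow 2)).sqrt
    (sq_add_sq_pos_of_ne_zero h0).ne').congr_deriv ?_
  simp only [dot2, nrm2]
  field_simp
  ring

end Plane

section RegularCurve

variable {γ : ℝ → ℝ × ℝ} {u c : ℝ}

theorem nrm2_smul_tangentC (hu : deriv γ u ≠ 0) :
    nrm2 (deriv γ u) • tangentC γ u = deriv γ u :=
  smul_inv_smul₀ (nrm2_ne_zero hu) _

theorem dot2_tangentC_self (hu : deriv γ u ≠ 0) : dot2 (tangentC γ u) (tangentC γ u) = 1 := by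
  have := nrm2_ne_zero hu
  rw [tangentC, dot2_smul_left, dot2_smul_right, dot2_self]
  field_simp

theorem dot2_normalC_self (hu : deriv γ u ≠ 0) : dot2 (normalC γ u) (normalC γ u) = 1 := by
  rw [normalC, dot2_Jrot_Jrot, dot2_tangentC_self hu]

theorem nrm2_smul_arcDeriv {E : Type*} [NormedAddCommGroup E] [NormedSpace ℝ E] (h : ℝ → E)
    (hu : deriv γ u ≠ 0) : nrm2 (deriv γ u) • arcDeriv γ h u = deriv h u :=
  smul_inv_smul₀ (nrm2_ne_zero hu) _

theorem dot2_deriv_tangentC_normalC (hu : deriv γ u ≠ 0) :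
    dot2 (deriv (tangentC γ) u) (normalC γ u) = curvature γ u * nrm2 (deriv γ u) := by
  rw [curvature, ← nrm2_smul_arcDeriv (tangentC γ) hu, dot2_smul_left, mul_comm]

theorem differentiable_tangentC (hγ : ContDiff ℝ 2 γ) (hreg : ∀ u, deriv γ u ≠ 0) :
    Differentiable ℝ (tangentC γ) := by
  have hγ' : Differentiable ℝ (deriv γ) := hγ.differentiable_deriv_two
  refine Differentiable.smul (Differentiable.inv (fun u => ?_) fun u => nrm2_ne_zero (hreg u)) hγ'
  exact (hasDerivAt_nrm2 (hγ' u).hasDerivAt (hreg u)).differentiableAt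

theorem hasDerivAt_tangentC (hγ : ContDiff ℝ 2 γ) (hreg : ∀ u, deriv γ u ≠ 0) (u : ℝ) :
    HasDerivAt (tangentC γ) ((curvature γ u * nrm2 (deriv γ u)) • normalC γ u) u := by
  have hT := (differentiable_tangentC hγ hreg u).hasDerivAt
  have hunit : (fun v => dot2 (tangentC γ v) (tangentC γ v)) = fun _ => 1 :=
    funext fun v => dot2_tangentC_self (hreg v)
  have horth : dot2 (deriv (tangentC γ) u) (tangentC γ u) = 0 := by
    have h := (hasDerivAt_dot2 hT hT).unique (hunit ▸ hasDerivAt_const u 1)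
    simp only [dot2] at h ⊢
    linarith
  have hT' := eq_dot2_Jrot_smul_Jrot (dot2_tangentC_self (hreg u)) horth
  rw [← normalC, dot2_deriv_tangentC_normalC (hreg u)] at hT'
  exact hT' ▸ hT

theorem hasDerivAt_normalC (hγ : ContDiff ℝ 2 γ) (hreg : ∀ u, deriv γ u ≠ 0) (u : ℝ) :
    HasDerivAt (normalC γ) (-(curvature γ u * nrm2 (deriv γ u)) • tangentC γ u) u := by
  refine (hasDerivAt_Jrot (hasDerivAt_tangentC hγ hreg u)).congr_deriv ?_
  rw [Jrot_smul, normalC, Jrot_Jrot, smul_neg, neg_smul]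

theorem periodic_deriv {E : Type*} [NormedAddCommGroup E] [NormedSpace ℝ E] {h : ℝ → E}
    (hh : Function.Periodic h c) : Function.Periodic (deriv h) c := fun u => by
  rw [← deriv_comp_add_const, funext hh]

theorem periodic_normalC (hγ : Function.Periodic γ c) : Function.Periodic (normalC γ) c :=
  fun u => by rw [normalC, normalC, tangentC, tangentC, periodic_deriv hγ u]

theorem periodic_arcDeriv {E : Type*} [NormedAddCommGroup E] [NormedSpace ℝ E] {h : ℝ → E}
    (hγ : Function.Periodic γ c) (hh : Function.Periodic h c) :
    Function.Periodic (arcDeriv γ h) c := fun u => by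
  rw [arcDeriv, arcDeriv, periodic_deriv hγ u, periodic_deriv hh u]

end RegularCurve

section RegularFamily

/-- The density `e^ψ |∂_u γ|` of the `ψ`-length with respect to the parameter `u`. -/
def psiDensity (ψ : ℝ × ℝ → ℝ) (γ : ℝ → ℝ × ℝ) (u : ℝ) : ℝ :=
  exp (ψ (γ u)) * nrm2 (deriv γ u)

/-- The `ψ`-length of the arc of `γ` over the parameter interval from `a` to `b`. -/
def psiLength (ψ : ℝ × ℝ → ℝ) (γ : ℝ → ℝ × ℝ) (a b : ℝ) : ℝ :=
  ∫ u in a..b, psiDensity ψ γ u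

/-- A smooth family of regular plane curves, not necessarily closed, over an open set `I` of
times. -/
structure IsRegularFamily (I : Set ℝ) (γ : ℝ → ℝ → ℝ × ℝ) : Prop where
  isOpen : IsOpen I
  smooth : SmoothFamilyOn I γ
  regular : ∀ t ∈ I, ∀ u, deriv (γ t) u ≠ 0

namespace IsRegularFamily

variable {I : Set ℝ} {γ : ℝ → ℝ → ℝ × ℝ} {ψ : ℝ × ℝ → ℝ}

theorem contDiff_two (h : IsRegularFamily I γ) {t : ℝ} (ht : t ∈ I) : ContDiff ℝ 2 (γ t) :=
  (h.smooth.contDiff_slice ht).of_le (WithTop.coe_le_coe.2 le_top)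

theorem smooth_nrm2_deriv (h : IsRegularFamily I γ) :
    SmoothFamilyOn I fun t u => nrm2 (deriv (γ t) u) := fun p hp =>
  ContDiffAt.comp_contDiffWithinAt (g := nrm2) (f := fun p : ℝ × ℝ => deriv (γ p.1) p.2) p
    (contDiffAt_nrm2 (h.regular p.1 hp.1 p.2)) (h.smooth.deriv_slice h.isOpen p hp)

theorem smooth_arcDeriv {E : Type*} [NormedAddCommGroup E] [NormedSpace ℝ E] {F : ℝ → ℝ → E}
    (h : IsRegularFamily I γ) (hF : SmoothFamilyOn I F) :
    SmoothFamilyOn I fun t => arcDeriv (γ t) (F t) :=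
  (ContDiffOn.inv h.smooth_nrm2_deriv fun p hp => nrm2_ne_zero (h.regular p.1 hp.1 p.2)).smul
    (hF.deriv_slice h.isOpen)

theorem smooth_tangentC (h : IsRegularFamily I γ) : SmoothFamilyOn I fun t => tangentC (γ t) :=
  h.smooth_arcDeriv h.smooth

theorem smooth_normalC (h : IsRegularFamily I γ) : SmoothFamilyOn I fun t => normalC (γ t) :=
  (ContDiffOn.snd h.smooth_tangentC).neg.prodMk (ContDiffOn.fst h.smooth_tangentC)

theorem smooth_curvature (h : IsRegularFamily I γ) : SmoothFamilyOn I fun t => curvature (γ t) :=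
  have hT' := h.smooth_arcDeriv h.smooth_tangentC
  ((ContDiffOn.fst hT').mul (ContDiffOn.fst h.smooth_normalC)).add
    ((ContDiffOn.snd hT').mul (ContDiffOn.snd h.smooth_normalC))

theorem smooth_psiCurv (h : IsRegularFamily I γ) (hψ : ∀ t ∈ I, ∀ u, ContDiffAt ℝ ∞ ψ (γ t u)) :
    SmoothFamilyOn I fun t => psiCurv ψ (γ t) :=
  ContDiffOn.sub h.smooth_curvature <| ContDiffOn.clm_apply
    (fun p hp => ((hψ p.1 hp.1 p.2).fderiv_right (m := ∞) (by simp)).comp_contDiffWithinAt p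
      (h.smooth p hp))
    h.smooth_normalC

theorem smooth_exp_comp (h : IsRegularFamily I γ) (hψ : ∀ t ∈ I, ∀ u, ContDiffAt ℝ ∞ ψ (γ t u)) :
    SmoothFamilyOn I fun t u => exp (ψ (γ t u)) := fun p hp =>
  ((hψ p.1 hp.1 p.2).comp_contDiffWithinAt p (h.smooth p hp)).exp

theorem smooth_psiDensity (h : IsRegularFamily I γ)
    (hψ : ∀ t ∈ I, ∀ u, ContDiffAt ℝ ∞ ψ (γ t u)) :
    SmoothFamilyOn I fun t => psiDensity ψ (γ t) :=
  ContDiffOn.mul (h.smooth_exp_comp hψ) h.smooth_nrm2_deriv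

end IsRegularFamily

end RegularFamily

section NormalVariation

/-- A regular family of plane curves `γ t`, `t ∈ I`, moving in the normal direction with smooth
speed `f`, that is, `∂_t γ = f N`. -/
structure IsNormalVariation (I : Set ℝ) (γ : ℝ → ℝ → ℝ × ℝ) (f : ℝ → ℝ → ℝ) : Prop extends
    IsRegularFamily I γ where
  smooth_speed : SmoothFamilyOn I f
  deriv_time : ∀ t ∈ I, ∀ u, deriv (fun τ => γ τ u) t = f t u • normalC (γ t) u

/-- The integrand, with respect to the parameter `u`, of the second variation of the `ψ`-length at
time `t` under a normal variation with speed `f`. The curve `γ t` need not be `ψ`-minimal, which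
accounts for the terms with the factor `psiCurv`. -/
def secondVariationDensity (ψ : ℝ × ℝ → ℝ) (γ : ℝ → ℝ → ℝ × ℝ) (f : ℝ → ℝ → ℝ) (t u : ℝ) : ℝ :=
  (arcDeriv (γ t) (f t) u ^ 2
    - f t u ^ 2 * (curvature (γ t) u ^ 2 - hess2 ψ (γ t u) (normalC (γ t) u))
    + psiCurv ψ (γ t) u * (f t u ^ 2 * psiCurv ψ (γ t) u - deriv (fun τ => f τ u) t))
    * exp (ψ (γ t u)) * nrm2 (deriv (γ t) u)

/-- The function `f ∂_s f e^ψ` along `γ`, whose values at the end points are the boundary terms of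
the second variation. -/
def secondVariationFlux (ψ : ℝ × ℝ → ℝ) (γ : ℝ → ℝ × ℝ) (f : ℝ → ℝ) (u : ℝ) : ℝ :=
  f u * arcDeriv γ f u * exp (ψ (γ u))

theorem hess2_eq_fderiv_fderiv {ψ : ℝ × ℝ → ℝ} {x : ℝ × ℝ} (hψ : DifferentiableAt ℝ (fderiv ℝ ψ) x)
    (v : ℝ × ℝ) : hess2 ψ x v = fderiv ℝ (fderiv ℝ ψ) x v v := by
  simp [hess2, fderiv_clm_apply hψ (differentiableAt_const v)]

namespace IsNormalVariation

variable {I : Set ℝ} {γ : ℝ → ℝ → ℝ × ℝ} {f : ℝ → ℝ → ℝ} {ψ : ℝ × ℝ → ℝ} {t : ℝ}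

theorem hasDerivAt (h : IsNormalVariation I γ f) (ht : t ∈ I) (u : ℝ) :
    HasDerivAt (fun τ => γ τ u) (f t u • normalC (γ t) u) t :=
  h.deriv_time t ht u ▸ h.smooth.hasDerivAt_time h.isOpen ht u

theorem hasDerivAt_deriv (h : IsNormalVariation I γ f) (ht : t ∈ I) (u : ℝ) :
    HasDerivAt (fun τ => deriv (γ τ) u)
      (deriv (f t) u • normalC (γ t) u
        - (f t u * curvature (γ t) u * nrm2 (deriv (γ t) u)) • tangentC (γ t) u) t := by
  have hfN := (h.smooth_speed.differentiable_slice ht u).hasDerivAt.fun_smul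
    (hasDerivAt_normalC (h.contDiff_two ht) (h.regular t ht) u)
  refine ((h.smooth.deriv_slice h.isOpen).hasDerivAt_time h.isOpen ht u).congr_deriv ?_
  rw [h.smooth.deriv_time_deriv_slice h.isOpen ht u, funext (h.deriv_time t ht), hfN.deriv]
  module

theorem hasDerivAt_nrm2_deriv (h : IsNormalVariation I γ f) (ht : t ∈ I) (u : ℝ) :
    HasDerivAt (fun τ => nrm2 (deriv (γ τ) u))
      (-(f t u * curvature (γ t) u) * nrm2 (deriv (γ t) u)) t := by
  have hu := h.regular t ht u
  have hq := nrm2_ne_zero hu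
  refine (hasDerivAt_nrm2 (h.hasDerivAt_deriv ht u) hu).congr_deriv ?_
  rw [div_eq_iff hq]
  nth_rw 2 [← nrm2_smul_tangentC hu]
  rw [dot2_smul_right, dot2_sub_left, dot2_smul_left, dot2_smul_left, dot2_tangentC_self hu,
    normalC, dot2_Jrot_left_self]
  ring

theorem hasDerivAt_inv_nrm2_deriv (h : IsNormalVariation I γ f) (ht : t ∈ I) (u : ℝ) :
    HasDerivAt (fun τ => (nrm2 (deriv (γ τ) u))⁻¹)
      (f t u * curvature (γ t) u * (nrm2 (deriv (γ t) u))⁻¹) t := by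
  have hq := nrm2_ne_zero (h.regular t ht u)
  refine ((h.hasDerivAt_nrm2_deriv ht u).fun_inv hq).congr_deriv ?_
  field_simp

theorem hasDerivAt_tangentC (h : IsNormalVariation I γ f) (ht : t ∈ I) (u : ℝ) :
    HasDerivAt (fun τ => tangentC (γ τ) u) (arcDeriv (γ t) (f t) u • normalC (γ t) u) t := by
  have hu := h.regular t ht u
  refine ((h.hasDerivAt_inv_nrm2_deriv ht u).fun_smul (h.hasDerivAt_deriv ht u)).congr_deriv ?_
  rw [arcDeriv, smul_eq_mul]
  linear_combination (norm := module)
    (f t u * curvature (γ t) u * (nrm2 (deriv (γ t) u))⁻¹) • (nrm2_smul_tangentC hu).symm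

theorem hasDerivAt_normalC (h : IsNormalVariation I γ f) (ht : t ∈ I) (u : ℝ) :
    HasDerivAt (fun τ => normalC (γ τ) u) (-arcDeriv (γ t) (f t) u • tangentC (γ t) u) t := by
  refine (hasDerivAt_Jrot (h.hasDerivAt_tangentC ht u)).congr_deriv ?_
  rw [Jrot_smul, normalC, Jrot_Jrot, smul_neg, neg_smul]

theorem hasDerivAt_deriv_tangentC (h : IsNormalVariation I γ f) (ht : t ∈ I) (u : ℝ) :
    HasDerivAt (fun τ => deriv (tangentC (γ τ)) u)
      (deriv (arcDeriv (γ t) (f t)) u • normalC (γ t) u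
        - (arcDeriv (γ t) (f t) u * curvature (γ t) u * nrm2 (deriv (γ t) u))
          • tangentC (γ t) u) t := by
  have hT := h.smooth_tangentC
  have hfN := ((h.smooth_arcDeriv h.smooth_speed).differentiable_slice ht u).hasDerivAt.fun_smul
    (_root_.hasDerivAt_normalC (h.contDiff_two ht) (h.regular t ht) u)
  refine ((hT.deriv_slice h.isOpen).hasDerivAt_time h.isOpen ht u).congr_deriv ?_
  rw [hT.deriv_time_deriv_slice h.isOpen ht u,
    funext fun v => (h.hasDerivAt_tangentC ht v).deriv, hfN.deriv]
  module

theorem hasDerivAt_curvature (h : IsNormalVariation I γ f) (ht : t ∈ I) (u : ℝ) :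
    HasDerivAt (fun τ => curvature (γ τ) u)
      (arcDeriv (γ t) (arcDeriv (γ t) (f t)) u + f t u * curvature (γ t) u ^ 2) t := by
  have hu := h.regular t ht u
  have hT' := (_root_.hasDerivAt_tangentC (h.contDiff_two ht) (h.regular t ht) u).deriv
  have hdot : HasDerivAt (fun τ => dot2 (deriv (tangentC (γ τ)) u) (normalC (γ τ) u))
      (deriv (arcDeriv (γ t) (f t)) u) t := by
    refine (hasDerivAt_dot2 (h.hasDerivAt_deriv_tangentC ht u)
      (h.hasDerivAt_normalC ht u)).congr_deriv ?_
    rw [hT', dot2_sub_left]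
    simp only [dot2_smul_left, dot2_smul_right, dot2_normalC_self hu]
    simp only [normalC, dot2_Jrot_left_self, dot2_Jrot_right_self]
    ring
  have hk : (fun τ => curvature (γ τ) u) = fun τ =>
      (nrm2 (deriv (γ τ) u))⁻¹ * dot2 (deriv (tangentC (γ τ)) u) (normalC (γ τ) u) :=
    funext fun τ => by rw [curvature, arcDeriv, dot2_smul_left]
  have hq := nrm2_ne_zero hu
  rw [hk]
  refine ((h.hasDerivAt_inv_nrm2_deriv ht u).fun_mul hdot).congr_deriv ?_
  rw [dot2_deriv_tangentC_normalC hu, arcDeriv, smul_eq_mul]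
  field_simp
  ring

theorem hasDerivAt_psiCurv (h : IsNormalVariation I γ f) (ht : t ∈ I) (u : ℝ)
    (hψ : ContDiffAt ℝ 2 ψ (γ t u)) :
    HasDerivAt (fun τ => psiCurv ψ (γ τ) u)
      (arcDeriv (γ t) (arcDeriv (γ t) (f t)) u
        + f t u * (curvature (γ t) u ^ 2 - hess2 ψ (γ t u) (normalC (γ t) u))
        + arcDeriv (γ t) (f t) u * fderiv ℝ ψ (γ t u) (tangentC (γ t) u)) t := by
  have hDψ : DifferentiableAt ℝ (fderiv ℝ ψ) (γ t u) :=
    (hψ.fderiv_right (m := 1) (by norm_num)).differentiableAt (by simp)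
  have hDψγ : HasDerivAt (fun τ => fderiv ℝ ψ (γ τ u))
      (fderiv ℝ (fderiv ℝ ψ) (γ t u) (f t u • normalC (γ t) u)) t :=
    hDψ.hasFDerivAt.comp_hasDerivAt t (h.hasDerivAt ht u)
  refine ((h.hasDerivAt_curvature ht u).fun_sub
    (hDψγ.clm_apply (h.hasDerivAt_normalC ht u))).congr_deriv ?_
  rw [hess2_eq_fderiv_fderiv hDψ]
  simp only [map_smul, _root_.smul_apply, smul_eq_mul]
  ring

theorem hasDerivAt_psiDensity (h : IsNormalVariation I γ f) (ht : t ∈ I) (u : ℝ)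
    (hψ : DifferentiableAt ℝ ψ (γ t u)) :
    HasDerivAt (fun τ => psiDensity ψ (γ τ) u)
      (-(f t u * psiCurv ψ (γ t) u * psiDensity ψ (γ t) u)) t := by
  refine ((hψ.hasFDerivAt.comp_hasDerivAt t (h.hasDerivAt ht u)).exp.fun_mul
    (h.hasDerivAt_nrm2_deriv ht u)).congr_deriv ?_
  simp only [Function.comp_apply, map_smul, smul_eq_mul, psiDensity, psiCurv]
  ring

theorem hasDerivAt_psiLength (h : IsNormalVariation I γ f)
    (hψ : ∀ t ∈ I, ∀ u, ContDiffAt ℝ ∞ ψ (γ t u)) (ht : t ∈ I) (a b : ℝ) :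
    HasDerivAt (fun τ => psiLength ψ (γ τ) a b)
      (∫ u in a..b, -(f t u * psiCurv ψ (γ t) u * psiDensity ψ (γ t) u)) t := by
  refine ((h.smooth_psiDensity hψ).hasDerivAt_integral h.isOpen ht a b).congr_deriv ?_
  refine intervalIntegral.integral_congr fun u _ => ?_
  exact (h.hasDerivAt_psiDensity ht u ((hψ t ht u).differentiableAt (by simp))).deriv

theorem smooth_secondVariationFlux (h : IsNormalVariation I γ f)
    (hψ : ∀ t ∈ I, ∀ u, ContDiffAt ℝ ∞ ψ (γ t u)) :
    SmoothFamilyOn I fun t => secondVariationFlux ψ (γ t) (f t) :=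
  (ContDiffOn.mul h.smooth_speed (h.smooth_arcDeriv h.smooth_speed)).mul (h.smooth_exp_comp hψ)

theorem deriv_secondVariationFlux (h : IsNormalVariation I γ f) (ht : t ∈ I) (u : ℝ)
    (hψ : DifferentiableAt ℝ ψ (γ t u)) :
    deriv (secondVariationFlux ψ (γ t) (f t)) u =
      (arcDeriv (γ t) (f t) u ^ 2 + f t u * arcDeriv (γ t) (arcDeriv (γ t) (f t)) u
        + f t u * arcDeriv (γ t) (f t) u * fderiv ℝ ψ (γ t u) (tangentC (γ t) u))
        * psiDensity ψ (γ t) u := by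
  have hu := h.regular t ht u
  have hf := (h.smooth_speed.differentiable_slice ht u).hasDerivAt
  have hf' := ((h.smooth_arcDeriv h.smooth_speed).differentiable_slice ht u).hasDerivAt
  have hγ := (h.smooth.differentiable_slice ht u).hasDerivAt
  have hT : fderiv ℝ ψ (γ t u) (deriv (γ t) u) =
      nrm2 (deriv (γ t) u) * fderiv ℝ ψ (γ t u) (tangentC (γ t) u) := by
    rw [← smul_eq_mul, ← map_smul, nrm2_smul_tangentC hu]
  refine ((hf.fun_mul hf').fun_mul (hψ.hasFDerivAt.comp_hasDerivAt u hγ).exp).deriv.trans ?_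
  rw [← nrm2_smul_arcDeriv (f t) hu, ← nrm2_smul_arcDeriv (arcDeriv (γ t) (f t)) hu, hT]
  simp only [Function.comp_apply, smul_eq_mul, psiDensity]
  ring

theorem hasDerivAt_firstVariationDensity (h : IsNormalVariation I γ f) (ht : t ∈ I) (u : ℝ)
    (hψ : ContDiffAt ℝ 2 ψ (γ t u)) :
    HasDerivAt (fun τ => -(f τ u * psiCurv ψ (γ τ) u * psiDensity ψ (γ τ) u))
      (secondVariationDensity ψ γ f t u - deriv (secondVariationFlux ψ (γ t) (f t)) u) t := by
  have hψ' : DifferentiableAt ℝ ψ (γ t u) := hψ.differentiableAt (by simp)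
  have hfk := (h.smooth_speed.hasDerivAt_time h.isOpen ht u).fun_mul (h.hasDerivAt_psiCurv ht u hψ)
  refine (hfk.fun_mul (h.hasDerivAt_psiDensity ht u hψ')).fun_neg.congr_deriv ?_
  rw [h.deriv_secondVariationFlux ht u hψ', secondVariationDensity, psiDensity]
  ring

theorem iteratedDeriv_two_psiLength (h : IsNormalVariation I γ f)
    (hψ : ∀ t ∈ I, ∀ u, ContDiffAt ℝ ∞ ψ (γ t u)) (ht : t ∈ I) (a b : ℝ) :
    iteratedDeriv 2 (fun τ => psiLength ψ (γ τ) a b) t =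
      (∫ u in a..b, secondVariationDensity ψ γ f t u)
        - (secondVariationFlux ψ (γ t) (f t) b - secondVariationFlux ψ (γ t) (f t) a) := by
  set W : ℝ → ℝ → ℝ := fun t u => -(f t u * psiCurv ψ (γ t) u * psiDensity ψ (γ t) u)
  set G : ℝ → ℝ := secondVariationFlux ψ (γ t) (f t)
  have hW : SmoothFamilyOn I W :=
    ((ContDiffOn.mul h.smooth_speed (h.smooth_psiCurv hψ)).mul (h.smooth_psiDensity hψ)).neg
  have hL' : deriv (fun τ => psiLength ψ (γ τ) a b) =ᶠ[𝓝 t] fun τ => ∫ u in a..b, W τ u := by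
    filter_upwards [h.isOpen.mem_nhds ht] with τ hτ using (h.hasDerivAt_psiLength hψ hτ a b).deriv
  have hdensity : secondVariationDensity ψ γ f t =
      fun u => deriv (fun τ => W τ u) t + deriv G u := funext fun u => by
    have hψ2 := (hψ t ht u).of_le (m := 2) (WithTop.coe_le_coe.2 le_top)
    rw [(h.hasDerivAt_firstVariationDensity ht u hψ2).deriv, sub_add_cancel]
  have hW't : Continuous fun u => deriv (fun τ => W τ u) t :=
    ((hW.deriv_time h.isOpen).contDiff_slice ht).continuous
  have hG := h.smooth_secondVariationFlux hψ
  have hG' : Continuous (deriv G) := ((hG.deriv_slice h.isOpen).contDiff_slice ht).continuous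
  rw [iteratedDeriv_succ, iteratedDeriv_one, hL'.deriv_eq,
    (hW.hasDerivAt_integral h.isOpen ht a b).deriv, hdensity,
    intervalIntegral.integral_add (hW't.intervalIntegrable a b) (hG'.intervalIntegrable a b),
    intervalIntegral.integral_deriv_eq_sub (fun u _ => hG.differentiable_slice ht u)
      (hG'.intervalIntegrable a b), add_sub_cancel_right]

theorem speed_eq_dot2 (h : IsNormalVariation I γ f) (ht : t ∈ I) (u : ℝ) :
    f t u = dot2 (deriv (fun τ => γ τ u) t) (normalC (γ t) u) := by
  rw [h.deriv_time t ht u, dot2_smul_left, dot2_normalC_self (h.regular t ht u), mul_one]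

theorem periodic_speed (h : IsNormalVariation I γ f) {c : ℝ}
    (hper : ∀ t ∈ I, Function.Periodic (γ t) c) (ht : t ∈ I) : Function.Periodic (f t) c := by
  intro u
  have hγ : (fun τ => γ τ (u + c)) =ᶠ[𝓝 t] fun τ => γ τ u := by
    filter_upwards [h.isOpen.mem_nhds ht] with τ hτ using hper τ hτ u
  rw [h.speed_eq_dot2 ht, h.speed_eq_dot2 ht, hγ.deriv_eq, periodic_normalC (hper t ht) u]

theorem periodic_secondVariationFlux (h : IsNormalVariation I γ f) {c : ℝ}
    (hper : ∀ t ∈ I, Function.Periodic (γ t) c) (ht : t ∈ I) :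
    Function.Periodic (secondVariationFlux ψ (γ t) (f t)) c := fun u => by
  have hf := h.periodic_speed hper ht
  rw [secondVariationFlux, secondVariationFlux, hf u, periodic_arcDeriv (hper t ht) hf u,
    hper t ht u]

end IsNormalVariation

end NormalVariation

theorem psiLength_second_variation_general {I : Set ℝ} {γ : ℝ → ℝ → ℝ × ℝ} {f : ℝ → ℝ → ℝ}
    {ψ : ℝ × ℝ → ℝ} {t c : ℝ} (h : IsNormalVariation I γ f)
    (hper : ∀ t ∈ I, Function.Periodic (γ t) c) (hψ : ∀ t ∈ I, ∀ u, ContDiffAt ℝ ∞ ψ (γ t u))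
    (ht : t ∈ I) :
    iteratedDeriv 2 (fun τ => psiLength ψ (γ τ) 0 c) t =
      ∫ u in 0..c, secondVariationDensity ψ γ f t u := by
  rw [h.iteratedDeriv_two_psiLength hψ ht, (h.periodic_secondVariationFlux hper ht).eq, sub_self,
    sub_zero]

/-- second variation of the ψ-length at a ψ-minimal curve under a
normal variation ∂_t γ = f N. -/
theorem psiLength_second_variation
    (ε : ℝ) (hε : 0 < ε) (γ : ℝ → ℝ → ℝ × ℝ) (f : ℝ → ℝ → ℝ)
    (hfam : SmoothFamily γ)
    (hf : ContDiff ℝ (⊤ : ℕ∞) fun p : ℝ × ℝ => f p.1 p.2)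
    (hclosed : ∀ t ∈ Set.Ioo (-ε) ε, IsClosedCurve (γ t))
    (ψ : ℝ × ℝ → ℝ) (U : Set (ℝ × ℝ)) (hU : IsOpen U)
    (hψ : ContDiffOn ℝ (⊤ : ℕ∞) ψ U)
    (him : ∀ t ∈ Set.Ioo (-ε) ε, ∀ u : ℝ, γ t u ∈ U)
    (hflow : ∀ t ∈ Set.Ioo (-ε) ε, ∀ u : ℝ,
      deriv (fun τ => γ τ u) t = f t u • normalC (γ t) u)
    (hminimal : IsPsiMinimal ψ (γ 0)) :
    iteratedDeriv 2
      (fun τ => ∫ u in (0:ℝ)..(2*π), Real.exp (ψ (γ τ u)) * nrm2 (deriv (γ τ) u)) 0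
    = ∫ u in (0:ℝ)..(2*π),
        ((arcDeriv (γ 0) (f 0) u) ^ 2
          - (f 0 u) ^ 2 * ((curvature (γ 0) u) ^ 2 - hess2 ψ (γ 0 u) (normalC (γ 0) u)))
          * Real.exp (ψ (γ 0 u)) * nrm2 (deriv (γ 0) u) := by
  have h : IsNormalVariation (Ioo (-ε) ε) γ f :=
    { isOpen := isOpen_Ioo
      smooth := hfam.contDiffOn
      regular := fun t ht => (hclosed t ht).regular
      smooth_speed := hf.contDiffOn
      deriv_time := hflow }
  have hk : ∀ u, psiCurv ψ (γ 0) u = 0 := hminimal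
  have hvar := psiLength_second_variation_general h (fun t ht => (hclosed t ht).periodic)
    (fun t ht u => hψ.contDiffAt (hU.mem_nhds (him t ht u))) ⟨neg_neg_of_pos hε, hε⟩
  simpa only [psiLength, psiDensity, secondVariationDensity, hk, zero_mul, add_zero] using hvar
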